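/- arXiv:math/0211387 — 3 statements merged into one kernel-verified Lean document; each statement's English description precedes it below -/
import Mathlib

section
/- Let τ ∈ [0,1] and n ≥ 1. The urn measure m_n decomposes as the mixture m_n = Σ_π p_τ(π) · λ_π, the sum being over all partitions π of {1,…,n}, where p_τ is the Ewens weight and λ_π is the pushforward of the product measure λ^{⊗(blocks of π)} under the diagonal-filling map φ_π. -/
/-!
Conditionally on the first `n` draws having law `λ_π`, the next draw is fresh with weight `1 - τ`,
which gives `λ_{π'}` for `π'` equal to `π` with a new singleton block, and repeats the value of a
block `B` with weight `τ * |B|`, which gives `λ_{π'}` for `π'` equal to `π` with the new index put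
into `B`. Every partition of `{1, …, n + 1}` arises in exactly one of these ways, and the Ewens
numerator is multiplied by exactly the same weight, the factor `|B|` turning `(|B| - 1)!` into
`|B|!`; the normalising constant depends only on `n`.
-/

open MeasureTheory

noncomputable section

/-- The circle `ℝ/ℤ`. -/
abbrev Circle1 : Type := AddCircle (1 : ℝ)

/-- The Pólya-urn type Markov kernel
`κ_n(x, ·) = ((1−τ)·λ + τ·Σ_{i=1}^n δ_{x_i}) / ((1−τ) + nτ)`. -/
def urnKernel (τ : ℝ) {n : ℕ} (x : Fin n → Circle1) : Measure Circle1 :=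
  (ENNReal.ofReal ((1 - τ) + n * τ))⁻¹ •
    (ENNReal.ofReal (1 - τ) • (volume : Measure Circle1)
      + ENNReal.ofReal τ • ∑ i : Fin n, Measure.dirac (x i))

/-- The urn measures: `m 1 = λ` and `m (n+1)` is the image of the measure–kernel
product `m n ⊗ κ_n` under `(x, y) ↦ (x_1, …, x_n, y)`.  (`m 0` is a dummy value.) -/
def urnMeasure (τ : ℝ) : (n : ℕ) → Measure (Fin n → Circle1)
  | 0 => Measure.dirac (fun i => i.elim0)
  | 1 => (volume : Measure Circle1).map (fun y => fun _ : Fin 1 => y)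
  | (n + 2) =>
      (urnMeasure τ (n + 1)).bind
        (fun x => (urnKernel τ x).map (Fin.snoc x))

/-- For a partition `π` of `{1,…,n}`, the set `A_π` of `x` with `x i = x j` iff `i`
and `j` lie in the same block of `π`. -/
def samePartSet {n : ℕ} (P : Finpartition (Finset.univ : Finset (Fin n))) :
    Set (Fin n → Circle1) :=
  {x | ∀ i j : Fin n, x i = x j ↔ ∃ B ∈ P.parts, i ∈ B ∧ j ∈ B}

/-- The Ewens weight of a partition `π` of `{1,…,n}` with `k` blocks of sizes
`n_1,…,n_k`:
`p_τ(π) = (1−τ)^{k−1} · τ^{n−k} · ∏_i (n_i − 1)! / ∏_{j=1}^{n−1}((1−τ)+jτ)`. -/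
def ewens (τ : ℝ) (n : ℕ) (P : Finpartition (Finset.univ : Finset (Fin n))) : ℝ :=
  ((1 - τ) ^ (P.parts.card - 1) * τ ^ (n - P.parts.card) *
    ∏ B ∈ P.parts, ((B.card - 1).factorial : ℝ)) /
    ∏ j ∈ Finset.Icc 1 (n - 1), ((1 - τ) + (j : ℝ) * τ)

/-- `λ_π`: the pushforward of the product measure `λ^{⊗ B(π)}` (one factor for each
block of `π`) under the diagonal-filling map `φ_π`, `(φ_π y)_i = y(B)` for `i ∈ B`. -/
def lambdaPart {n : ℕ} (lam : Measure Circle1)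
    (P : Finpartition (Finset.univ : Finset (Fin n))) : Measure (Fin n → Circle1) :=
  (Measure.pi (fun _ : P.parts => lam)).map
    (fun y i => y ⟨P.part i, P.part_mem.2 (Finset.mem_univ i)⟩)

section Blocks

variable {ι β : Type*} [Fintype ι] [DecidableEq ι]

/-- The block of `P` containing `i`, as an element of the type of blocks. -/
def block (P : Finpartition (Finset.univ : Finset ι)) (i : ι) : P.parts :=
  ⟨P.part i, P.part_mem.2 (Finset.mem_univ i)⟩

lemma block_eq_iff_mem {P : Finpartition (Finset.univ : Finset ι)} {i : ι} {B : P.parts} :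
    block P i = B ↔ i ∈ B.1 :=
  Subtype.ext_iff.trans (P.part_eq_iff_mem B.2)

lemma block_surjective (P : Finpartition (Finset.univ : Finset ι)) :
    Function.Surjective (block P) := fun B =>
  (P.nonempty_of_mem_parts B.2).imp fun _ => block_eq_iff_mem.2

lemma filter_block_eq (P : Finpartition (Finset.univ : Finset ι)) (B : P.parts) :
    Finset.univ.filter (block P · = B) = B.1 := by
  simp [block_eq_iff_mem]

lemma eq_of_block_eq_block_iff {P Q : Finpartition (Finset.univ : Finset ι)}
    (h : ∀ i j, block P i = block P j ↔ block Q i = block Q j) : P = Q := by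
  have part_eq (i : ι) : P.part i = Q.part i := by
    ext j
    exact block_eq_iff_mem.symm.trans ((h j i).trans block_eq_iff_mem)
  have parts_eq (R : Finpartition (Finset.univ : Finset ι)) :
      R.parts = Finset.univ.image R.part := by
    ext B
    simpa [block, Subtype.ext_iff] using
      ⟨fun hB => (block_surjective R ⟨B, hB⟩).imp fun _ => congrArg Subtype.val,
        fun ⟨i, hi⟩ => hi ▸ (block R i).2⟩
  ext1
  rw [parts_eq P, parts_eq Q, funext part_eq]

instance [Subsingleton ι] : Subsingleton (Finpartition (Finset.univ : Finset ι)) :=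
  ⟨fun P Q => eq_of_block_eq_block_iff fun i j => by simp [Subsingleton.elim i j]⟩

open Classical in
/-- The partition of `ι` into the nonempty fibers of `f`. Partitions of `Fin (n + 1)` are built
in this way, by labelling each index with its block. -/
def fiberPartition (f : ι → β) : Finpartition (Finset.univ : Finset ι) :=
  Finpartition.ofSetoid (Setoid.ker f)

@[simp]
lemma block_fiberPartition_eq_iff {f : ι → β} {i j : ι} :
    block (fiberPartition f) i = block (fiberPartition f) j ↔ f i = f j := by
  classical
  rw [block_eq_iff_mem]
  exact Finpartition.mem_part_ofSetoid_iff_rel.trans eq_comm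

lemma exists_equiv_parts_fiberPartition {f : ι → β} (hf : Function.Surjective f) :
    ∃ e : β ≃ (fiberPartition f).parts, ∀ i, e (f i) = block (fiberPartition f) i := by
  choose g hg using hf
  have block_g (i : ι) : block (fiberPartition f) (g (f i)) = block (fiberPartition f) i :=
    block_fiberPartition_eq_iff.2 (hg _)
  refine ⟨.ofBijective (fun b => block (fiberPartition f) (g b)) ⟨fun b c hbc => ?_, fun B => ?_⟩,
    block_g⟩
  · simpa [hg] using hbc
  · exact (block_surjective _ B).elim fun i hi => ⟨f i, (block_g i).trans hi⟩

lemma card_parts_fiberPartition [Fintype β] {f : ι → β} (hf : Function.Surjective f) :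
    (fiberPartition f).parts.card = Fintype.card β := by
  obtain ⟨e, -⟩ := exists_equiv_parts_fiberPartition hf
  rw [Fintype.card_congr e, Fintype.card_coe]

lemma prod_parts_fiberPartition {M : Type*} [CommMonoid M] [Fintype β] [DecidableEq β]
    {f : ι → β} (hf : Function.Surjective f) (g : Finset ι → M) :
    ∏ B ∈ (fiberPartition f).parts, g B = ∏ b, g (Finset.univ.filter (f · = b)) := by
  obtain ⟨e, he⟩ := exists_equiv_parts_fiberPartition hf
  rw [← Finset.prod_coe_sort, ← e.prod_comp]
  refine Fintype.prod_congr _ _ fun b => congrArg g ?_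
  ext i
  rw [← block_eq_iff_mem, ← he, e.injective.eq_iff, Finset.mem_filter_univ]

end Blocks

section InsertLast

variable {n : ℕ} (P : Finpartition (Finset.univ : Finset (Fin n)))

/-- The partition of `Fin (n + 1)` obtained from a partition `P` of `Fin n` by adding the last
index to the block `B` (for `some B`), or as a new singleton block (for `none`). -/
def insertLast : Option P.parts → Finpartition (Finset.univ : Finset (Fin (n + 1)))
  | none => fiberPartition (Fin.snoc (α := fun _ => Option P.parts) (some ∘ block P) none)
  | some B => fiberPartition (Fin.snoc (α := fun _ => P.parts) (block P) B)

lemma snoc_some_block_none_surjective :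
    Function.Surjective (Fin.snoc (α := fun _ => Option P.parts) (some ∘ block P) none) := by
  rintro (_ | B)
  · exact ⟨Fin.last n, Fin.snoc_last ..⟩
  · exact (block_surjective P B).elim fun i hi => ⟨i.castSucc, by simp [hi]⟩

lemma snoc_block_surjective (B : P.parts) :
    Function.Surjective (Fin.snoc (α := fun _ => P.parts) (block P) B) := fun C =>
  (block_surjective P C).elim fun i hi => ⟨i.castSucc, by simp [hi]⟩

variable {P}

lemma block_insertLast_castSucc_eq_iff {o : Option P.parts} {i j : Fin n} :
    block (insertLast P o) i.castSucc = block (insertLast P o) j.castSucc ↔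
      block P i = block P j := by
  cases o <;> simp [insertLast]

lemma block_insertLast_castSucc_eq_last_iff {o : Option P.parts} {i : Fin n} :
    block (insertLast P o) i.castSucc = block (insertLast P o) (Fin.last n) ↔
      some (block P i) = o := by
  cases o <;> simp [insertLast]

lemma insertLast_eq_iff {o : Option P.parts}
    {Q : Finpartition (Finset.univ : Finset (Fin (n + 1)))} :
    insertLast P o = Q ↔
      (∀ i j : Fin n, block P i = block P j ↔ block Q i.castSucc = block Q j.castSucc) ∧
        ∀ i : Fin n, some (block P i) = o ↔ block Q i.castSucc = block Q (Fin.last n) := by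
  constructor
  · rintro rfl
    exact ⟨fun _ _ => block_insertLast_castSucc_eq_iff.symm,
      fun _ => block_insertLast_castSucc_eq_last_iff.symm⟩
  · rintro ⟨h_castSucc, h_last⟩
    refine eq_of_block_eq_block_iff fun i j => ?_
    cases i using Fin.lastCases with
    | last =>
      cases j using Fin.lastCases with
      | last => simp
      | cast j => rw [eq_comm, block_insertLast_castSucc_eq_last_iff, h_last, eq_comm]
    | cast i =>
      cases j using Fin.lastCases with
      | last => rw [block_insertLast_castSucc_eq_last_iff, h_last]
      | cast j => rw [block_insertLast_castSucc_eq_iff, h_castSucc]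

lemma insertLast_bijective : Function.Bijective
    fun p : Σ P : Finpartition (Finset.univ : Finset (Fin n)), Option P.parts =>
      insertLast p.1 p.2 := by
  constructor
  · rintro ⟨P, o⟩ ⟨P', o'⟩ h
    obtain ⟨h_castSucc, h_last⟩ := insertLast_eq_iff.1 h
    obtain rfl : P = P' := eq_of_block_eq_block_iff fun i j =>
      (h_castSucc i j).trans block_insertLast_castSucc_eq_iff
    obtain rfl : o = o' := by
      ext B
      obtain ⟨i, rfl⟩ := block_surjective P B
      simpa [block_insertLast_castSucc_eq_last_iff, eq_comm] using h_last i
    rfl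
  · intro Q
    let P := fiberPartition fun i : Fin n => block Q i.castSucc
    by_cases h : ∃ i : Fin n, block Q i.castSucc = block Q (Fin.last n)
    · obtain ⟨i, hi⟩ := h
      exact ⟨⟨P, some (block P i)⟩, insertLast_eq_iff.2 (by simp [P, hi])⟩
    · exact ⟨⟨P, none⟩, insertLast_eq_iff.2 (by simpa [P] using h)⟩

lemma sum_finpartition_fin_succ {M : Type*} [AddCommMonoid M]
    (F : Finpartition (Finset.univ : Finset (Fin (n + 1))) → M) :
    ∑ Q, F Q = ∑ P : Finpartition (Finset.univ : Finset (Fin n)),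
      (F (insertLast P none) + ∑ B, F (insertLast P (some B))) := by
  simp only [← insertLast_bijective.sum_comp, Fintype.sum_sigma, Fintype.sum_option]

end InsertLast

section Weight

variable {ι R : Type*} [Fintype ι] [DecidableEq ι] [CommSemiring R]

/-- The unnormalised Ewens weight `a ^ (k - 1) * b ^ (n - k) * ∏ B, (|B| - 1)!` of a partition
into `k` blocks of a type with `n` elements; `ewens τ n` is the case `a = 1 - τ`, `b = τ`, up to
its denominator. -/
def partitionWeight (a b : R) (P : Finpartition (Finset.univ : Finset ι)) : R :=
  a ^ (P.parts.card - 1) * b ^ (Fintype.card ι - P.parts.card) *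
    ∏ B ∈ P.parts, ((B.card - 1).factorial : R)

lemma partitionWeight_of_unique [Unique ι] (a b : R)
    (P : Finpartition (Finset.univ : Finset ι)) : partitionWeight a b P = 1 := by
  have const_surjective : Function.Surjective fun _ : ι => () := fun _ => ⟨default, rfl⟩
  rw [Subsingleton.elim P (fiberPartition fun _ => ()), partitionWeight,
    card_parts_fiberPartition const_surjective, prod_parts_fiberPartition const_surjective]
  simp

lemma ofReal_partitionWeight {a b : ℝ} (ha : 0 ≤ a) (hb : 0 ≤ b)
    (P : Finpartition (Finset.univ : Finset ι)) :
    ENNReal.ofReal (partitionWeight a b P) =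
      partitionWeight (ENNReal.ofReal a) (ENNReal.ofReal b) P := by
  simp only [partitionWeight, ENNReal.ofReal_mul (mul_nonneg (pow_nonneg ha _) (pow_nonneg hb _)),
    ENNReal.ofReal_mul (pow_nonneg ha _), ENNReal.ofReal_pow ha, ENNReal.ofReal_pow hb,
    ENNReal.ofReal_prod_of_nonneg fun _ _ => Nat.cast_nonneg _, ENNReal.ofReal_natCast]

lemma card_filter_snoc_eq {n : ℕ} {β : Type*} [DecidableEq β] (f : Fin n → β) (b c : β) :
    (Finset.univ.filter (Fin.snoc (α := fun _ => β) f b · = c)).card =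
      (Finset.univ.filter (f · = c)).card + if b = c then 1 else 0 := by
  simp only [Finset.card_filter, Fin.sum_univ_castSucc, Fin.snoc_castSucc, Fin.snoc_last]

variable {n : ℕ} (P : Finpartition (Finset.univ : Finset (Fin n)))

lemma prod_factorial_insertLast_none :
    ∏ B ∈ (insertLast P none).parts, ((B.card - 1).factorial : R) =
      ∏ B ∈ P.parts, ((B.card - 1).factorial : R) := by
  rw [insertLast, prod_parts_fiberPartition (snoc_some_block_none_surjective P),
    Fintype.prod_option, ← Finset.prod_coe_sort P.parts]
  simp [card_filter_snoc_eq, filter_block_eq]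

lemma prod_factorial_insertLast_some (B : P.parts) :
    ∏ C ∈ (insertLast P (some B)).parts, ((C.card - 1).factorial : R) =
      B.1.card * ∏ C ∈ P.parts, ((C.card - 1).factorial : R) := by
  have factorial_card (C : P.parts) :
      (((C.1.card + if B = C then 1 else 0) - 1).factorial : R) =
        (if B = C then (C.1.card : R) else 1) * ((C.1.card - 1).factorial : R) := by
    split_ifs
    · rw [Nat.add_sub_cancel, ← Nat.cast_mul, Nat.mul_factorial_pred
        (P.nonempty_of_mem_parts C.2).card_ne_zero]
    · simp
  rw [insertLast, prod_parts_fiberPartition (snoc_block_surjective P B),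
    ← Finset.prod_coe_sort P.parts]
  simp only [card_filter_snoc_eq, filter_block_eq, factorial_card, Finset.prod_mul_distrib,
    Fintype.prod_ite_eq]

lemma partitionWeight_insertLast_none [NeZero n] (a b : R) :
    partitionWeight a b (insertLast P none) = a * partitionWeight a b P := by
  have parts_pos : P.parts.card ≠ 0 := Finset.card_ne_zero_of_mem (block P 0).2
  have card_insertLast : (insertLast P none).parts.card = P.parts.card + 1 := by
    rw [insertLast, card_parts_fiberPartition (snoc_some_block_none_surjective P),
      Fintype.card_option, Fintype.card_coe]
  simp only [partitionWeight, prod_factorial_insertLast_none, card_insertLast, Fintype.card_fin,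
    Nat.add_sub_cancel, Nat.add_sub_add_right, ← mul_assoc, mul_pow_sub_one parts_pos]

lemma partitionWeight_insertLast_some (a b : R) (B : P.parts) :
    partitionWeight a b (insertLast P (some B)) = b * B.1.card * partitionWeight a b P := by
  have parts_le : P.parts.card ≤ n := by simpa using P.card_parts_le_card
  have card_insertLast : (insertLast P (some B)).parts.card = P.parts.card := by
    rw [insertLast, card_parts_fiberPartition (snoc_block_surjective P B), Fintype.card_coe]
  simp only [partitionWeight, prod_factorial_insertLast_some, card_insertLast, Fintype.card_fin,
    Nat.succ_sub parts_le, pow_succ]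
  ring

end Weight

section BlockMeasure

variable {ι β X : Type*} [Fintype ι] [DecidableEq ι] [MeasurableSpace X]

/-- The law of a family of points of `X` indexed by `ι`, with one independent `μ`-distributed value
for each block of `P`; it is `lambdaPart` over an arbitrary space. -/
def blockMeasure (μ : Measure X) (P : Finpartition (Finset.univ : Finset ι)) : Measure (ι → X) :=
  (Measure.pi fun _ : P.parts => μ).map fun y i => y (block P i)

lemma lambdaPart_eq_blockMeasure {n : ℕ} (lam : Measure Circle1)
    (P : Finpartition (Finset.univ : Finset (Fin n))) : lambdaPart lam P = blockMeasure lam P :=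
  rfl

variable (μ : Measure X) [SigmaFinite μ]

lemma blockMeasure_fiberPartition [Fintype β] {f : ι → β} (hf : Function.Surjective f) :
    blockMeasure μ (fiberPartition f) = (Measure.pi fun _ : β => μ).map fun y i => y (f i) := by
  obtain ⟨e, he⟩ := exists_equiv_parts_fiberPartition hf
  rw [blockMeasure, ← Measure.pi_map_piCongrLeft e fun _ => μ,
    Measure.map_map (by fun_prop) (by fun_prop)]
  congr 1 with y i
  rw [Function.comp_apply, ← he]
  exact MeasurableEquiv.piCongrLeft_apply_apply (β := fun _ => X) e y (f i)

lemma blockMeasure_of_unique [Unique ι] (P : Finpartition (Finset.univ : Finset ι)) :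
    blockMeasure μ P = μ.map fun y _ => y := by
  rw [Subsingleton.elim P (fiberPartition fun _ => ()),
    blockMeasure_fiberPartition μ (fun _ => ⟨default, rfl⟩)]
  conv_rhs => rw [← (measurePreserving_funUnique μ Unit).map_eq]
  rw [Measure.map_map (by fun_prop) (MeasurableEquiv.measurable _)]
  rfl

@[fun_prop]
lemma measurable_finSnoc {n : ℕ} {Y : Type*} [MeasurableSpace Y] {f : Y → Fin n → X} {g : Y → X}
    (hf : Measurable f) (hg : Measurable g) :
    Measurable fun y => Fin.snoc (α := fun _ => X) (f y) (g y) := by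
  refine measurable_pi_iff.2 fun i => ?_
  cases i using Fin.lastCases with
  | last => simpa only [Fin.snoc_last] using hg
  | cast i => simpa only [Fin.snoc_castSucc] using measurable_pi_iff.1 hf i

variable {n : ℕ} (P : Finpartition (Finset.univ : Finset (Fin n)))

lemma blockMeasure_insertLast_none :
    blockMeasure μ (insertLast P none) =
      ((blockMeasure μ P).prod μ).map fun p => Fin.snoc p.1 p.2 := by
  have prod_eq : (blockMeasure μ P).prod μ = ((Measure.pi fun _ : P.parts => μ).prod μ).map
      (Prod.map (fun y i => y (block P i)) id) := by
    rw [← Measure.map_prod_map _ _ (by fun_prop) measurable_id, Measure.map_id, blockMeasure]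
  rw [insertLast, blockMeasure_fiberPartition μ (snoc_some_block_none_surjective P), prod_eq,
    ← Measure.pi_map_piOptionEquivProd, Measure.map_map (by fun_prop) (by fun_prop),
    Measure.map_map (by fun_prop) (by fun_prop)]
  congr 1 with y i
  cases i using Fin.lastCases with
  | last => simp only [Function.comp_apply, Fin.snoc_last]; rfl
  | cast i => simp only [Function.comp_apply, Fin.snoc_castSucc]; rfl

lemma blockMeasure_insertLast_some (i : Fin n) :
    blockMeasure μ (insertLast P (some (block P i))) =
      (blockMeasure μ P).map fun x => Fin.snoc x (x i) := by
  rw [insertLast, blockMeasure_fiberPartition μ (snoc_block_surjective P _), blockMeasure,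
    Measure.map_map (by fun_prop) (by fun_prop)]
  congr 1 with y j
  cases j using Fin.lastCases <;> simp

end BlockMeasure

section Bind

open scoped ENNReal

variable {Y Z : Type*} [MeasurableSpace Y] [MeasurableSpace Z] {f g : Y → Measure Z}

lemma measurable_const_smul_measure (c : ℝ≥0∞) (hf : Measurable f) :
    Measurable fun y => c • f y :=
  Measure.measurable_of_measurable_coe _ fun _ hs =>
    ((Measure.measurable_coe hs).comp hf).const_mul c

variable (ν : Measure Y)

lemma bind_const_smul_right (c : ℝ≥0∞) (hf : Measurable f) :
    ν.bind (fun y => c • f y) = c • ν.bind f := by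
  ext s hs
  simp only [Measure.smul_apply, smul_eq_mul, Measure.bind_apply hs hf.aemeasurable,
    Measure.bind_apply hs (measurable_const_smul_measure c hf).aemeasurable]
  exact lintegral_const_mul c ((Measure.measurable_coe hs).comp hf)

lemma bind_add_right (hf : Measurable f) (hg : Measurable g) :
    ν.bind (fun y => f y + g y) = ν.bind f + ν.bind g := by
  ext s hs
  rw [Measure.add_apply, Measure.bind_apply hs (hf.fun_add hg).aemeasurable,
    Measure.bind_apply hs hf.aemeasurable, Measure.bind_apply hs hg.aemeasurable]
  exact lintegral_add_left ((Measure.measurable_coe hs).comp hf) _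

lemma bind_finsetSum_right {κ : Type*} (t : Finset κ) {f : κ → Y → Measure Z}
    (hf : ∀ k, Measurable (f k)) :
    ν.bind (fun y => ∑ k ∈ t, f k y) = ∑ k ∈ t, ν.bind (f k) := by
  classical
  induction t using Finset.induction_on with
  | empty => simp
  | insert k t hk ih =>
    simp only [Finset.sum_insert hk, ← ih]
    exact bind_add_right ν (hf k) (Finset.measurable_fun_sum _ fun k _ => hf k)

end Bind

section PolyaKernel

open scoped ENNReal

variable {ι X : Type*} [MeasurableSpace X]

/-- The Pólya urn kernel with normalising constant `c`: a draw from `μ` with weight `a`, or a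
repetition of one of the earlier draws `x i` with weight `b` for each `i`. -/
def polyaKernel [Fintype ι] (c a b : ℝ≥0∞) (μ : Measure X) (x : ι → X) : Measure X :=
  c • (a • μ + b • ∑ i, Measure.dirac (x i))

variable {n : ℕ} (c a b : ℝ≥0∞) (μ : Measure X)

lemma map_snoc_polyaKernel (x : Fin n → X) :
    (polyaKernel c a b μ x).map (Fin.snoc (α := fun _ => X) x) =
      c • (a • μ.map (Fin.snoc x) + b • ∑ i, Measure.dirac (Fin.snoc x (x i))) := by
  have measurable_snoc : Measurable (Fin.snoc (α := fun _ => X) x) := by fun_prop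
  simp only [polyaKernel, Measure.map_smul, Measure.map_add _ _ measurable_snoc,
    Measure.map_finset_sum' measurable_snoc.aemeasurable, Measure.map_dirac' measurable_snoc]

variable [SFinite μ]

lemma measurable_map_snoc :
    Measurable fun x : Fin n → X => μ.map (Fin.snoc (α := fun _ => X) x) := by
  have map_snoc (x : Fin n → X) : μ.map (Fin.snoc (α := fun _ => X) x) =
      (μ.map (Prod.mk x)).map fun p => Fin.snoc p.1 p.2 := by
    rw [Measure.map_map (by fun_prop) (by fun_prop)]
    rfl
  simp only [map_snoc]
  exact (Measure.measurable_map _ (by fun_prop)).comp Measurable.map_prodMk_left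

lemma measurable_dirac_snoc (i : Fin n) :
    Measurable fun x : Fin n → X => Measure.dirac (Fin.snoc (α := fun _ => X) x (x i)) :=
  Measure.measurable_dirac.comp (by fun_prop)

lemma measurable_map_snoc_polyaKernel :
    Measurable fun x : Fin n → X =>
      (polyaKernel c a b μ x).map (Fin.snoc (α := fun _ => X) x) := by
  simp only [map_snoc_polyaKernel]
  exact measurable_const_smul_measure c <|
    (measurable_const_smul_measure a (measurable_map_snoc μ)).add <|
    measurable_const_smul_measure b <| Finset.measurable_fun_sum _ fun i _ =>
    measurable_dirac_snoc i

lemma map_snoc_prod (ν : Measure (Fin n → X)) :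
    (ν.prod μ).map (fun p => Fin.snoc (α := fun _ => X) p.1 p.2) =
      ν.bind fun x => μ.map (Fin.snoc x) := by
  ext s hs
  rw [Measure.map_apply (by fun_prop) hs, Measure.prod_apply (hs.preimage (by fun_prop)),
    Measure.bind_apply hs (measurable_map_snoc μ).aemeasurable]
  exact lintegral_congr fun x => (Measure.map_apply (by fun_prop) hs).symm

lemma bind_map_snoc_polyaKernel (ν : Measure (Fin n → X)) :
    ν.bind (fun x => (polyaKernel c a b μ x).map (Fin.snoc (α := fun _ => X) x)) =
      c • (a • (ν.prod μ).map (fun p => Fin.snoc p.1 p.2) +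
        b • ∑ i, ν.map fun x => Fin.snoc x (x i)) := by
  have map_snoc_self (i : Fin n) : ν.map (fun x => Fin.snoc (α := fun _ => X) x (x i)) =
      ν.bind fun x => Measure.dirac (Fin.snoc x (x i)) :=
    (Measure.bind_dirac_eq_map ν (by fun_prop)).symm
  have measurable_sum_dirac :
      Measurable fun x : Fin n → X => ∑ i, Measure.dirac (Fin.snoc (α := fun _ => X) x (x i)) :=
    Finset.measurable_fun_sum _ fun i _ => measurable_dirac_snoc i
  have measurable_fresh := measurable_const_smul_measure a (measurable_map_snoc (n := n) μ)
  have measurable_old := measurable_const_smul_measure b measurable_sum_dirac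
  simp only [map_snoc_polyaKernel, map_snoc_prod, map_snoc_self]
  rw [bind_const_smul_right ν c (measurable_fresh.fun_add measurable_old),
    bind_add_right ν measurable_fresh measurable_old,
    bind_const_smul_right ν a (measurable_map_snoc μ),
    bind_const_smul_right ν b measurable_sum_dirac,
    bind_finsetSum_right ν Finset.univ measurable_dirac_snoc]

end PolyaKernel

section PolyaUrn

open scoped ENNReal

variable {X : Type*} [MeasurableSpace X]

/-- The law of the first `n + 1` draws of the Pólya urn over an arbitrary space, where `c k`
normalises the kernel given `k` earlier draws. The index is shifted with respect to `urnMeasure`,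
because the first draw has law `μ` even if `a = 0`. -/
def polyaUrn (c : ℕ → ℝ≥0∞) (a b : ℝ≥0∞) (μ : Measure X) : (n : ℕ) → Measure (Fin (n + 1) → X)
  | 0 => μ.map fun y _ => y
  | n + 1 => (polyaUrn c a b μ n).bind fun x => (polyaKernel (c (n + 1)) a b μ x).map (Fin.snoc x)

lemma bind_blockMeasure_polyaKernel {n : ℕ} (c a b : ℝ≥0∞) (μ : Measure X) [SigmaFinite μ]
    (P : Finpartition (Finset.univ : Finset (Fin n))) :
    (blockMeasure μ P).bind
        (fun x => (polyaKernel c a b μ x).map (Fin.snoc (α := fun _ => X) x)) =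
      c • (a • blockMeasure μ (insertLast P none) +
        b • ∑ B : P.parts, (B.1.card : ℝ≥0∞) • blockMeasure μ (insertLast P (some B))) := by
  rw [bind_map_snoc_polyaKernel, ← blockMeasure_insertLast_none]
  simp only [← blockMeasure_insertLast_some, Nat.cast_smul_eq_nsmul]
  rw [← Finset.sum_fiberwise' Finset.univ (block P)
    fun B => blockMeasure μ (insertLast P (some B))]
  simp only [Finset.sum_const, filter_block_eq]

theorem urnMeasure_eq_mixture_general (c : ℕ → ℝ≥0∞) (a b : ℝ≥0∞) (μ : Measure X) [SigmaFinite μ]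
    (n : ℕ) :
    polyaUrn c a b μ n = ∑ P : Finpartition (Finset.univ : Finset (Fin (n + 1))),
      ((∏ j ∈ Finset.Icc 1 n, c j) * partitionWeight a b P) • blockMeasure μ P := by
  induction n with
  | zero =>
    have : Unique (Fin (0 + 1)) := inferInstanceAs (Unique (Fin 1))
    rw [Fintype.sum_subsingleton _ (fiberPartition fun _ => ()), blockMeasure_of_unique,
      partitionWeight_of_unique]
    simp [polyaUrn]
  | succ n ih =>
    rw [polyaUrn, ih, ← Measure.sum_fintype, Measure.bind_sum _ _
      (measurable_map_snoc_polyaKernel ..).aemeasurable, Measure.sum_fintype,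
      sum_finpartition_fin_succ (n := n + 1)]
    refine Fintype.sum_congr _ _ fun P => ?_
    rw [Measure.bind_smul, bind_blockMeasure_polyaKernel, Finset.prod_Icc_succ_top (by lia)]
    simp only [partitionWeight_insertLast_none, partitionWeight_insertLast_some, smul_add,
      Finset.smul_sum, smul_smul]
    congr 1
    · congr 1; ring
    · exact Fintype.sum_congr _ _ fun B => by congr 1; ring

end PolyaUrn

section Circle

lemma urnMeasure_succ_eq_polyaUrn (τ : ℝ) (n : ℕ) :
    urnMeasure τ (n + 1) = polyaUrn (fun k => (ENNReal.ofReal ((1 - τ) + k * τ))⁻¹)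
      (ENNReal.ofReal (1 - τ)) (ENNReal.ofReal τ) volume n := by
  induction n with
  | zero => rfl
  | succ n ih =>
    rw [urnMeasure, polyaUrn, ih]
    rfl

lemma ofReal_ewens {τ : ℝ} (hτ0 : 0 ≤ τ) (hτ1 : τ ≤ 1) {n : ℕ}
    (P : Finpartition (Finset.univ : Finset (Fin n))) :
    ENNReal.ofReal (ewens τ n P) =
      (∏ j ∈ Finset.Icc 1 (n - 1), (ENNReal.ofReal ((1 - τ) + j * τ))⁻¹) *
        partitionWeight (ENNReal.ofReal (1 - τ)) (ENNReal.ofReal τ) P := by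
  have h1τ : 0 ≤ 1 - τ := sub_nonneg.2 hτ1
  have denom_pos : ∀ j ∈ Finset.Icc 1 (n - 1), 0 < (1 - τ) + j * τ := fun j hj => by
    have : (1 : ℝ) ≤ j := by exact_mod_cast (Finset.mem_Icc.1 hj).1
    nlinarith
  have ewens_eq : ewens τ n P =
      (∏ j ∈ Finset.Icc 1 (n - 1), ((1 - τ) + j * τ)⁻¹) * partitionWeight (1 - τ) τ P := by
    rw [ewens, partitionWeight, Fintype.card_fin, div_eq_inv_mul, Finset.prod_inv_distrib]
  rw [ewens_eq, ENNReal.ofReal_mul (Finset.prod_nonneg fun j _ => by positivity),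
    ENNReal.ofReal_prod_of_nonneg fun j _ => by positivity, ofReal_partitionWeight h1τ hτ0]
  congr 1
  exact Finset.prod_congr rfl fun j hj => ENNReal.ofReal_inv_of_pos (denom_pos j hj)

end Circle

/-- the urn measure decomposes as the mixture
`m_n = Σ_π p_τ(π) · λ_π` over all partitions `π` of `{1,…,n}`. -/
theorem urnMeasure_eq_mixture (τ : ℝ) (hτ0 : 0 ≤ τ) (hτ1 : τ ≤ 1)
    (n : ℕ) (hn : 1 ≤ n) :
    urnMeasure τ n
      = ∑ P : Finpartition (Finset.univ : Finset (Fin n)),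
          ENNReal.ofReal (ewens τ n P) • lambdaPart volume P := by
  obtain ⟨m, rfl⟩ := Nat.exists_eq_add_of_le' hn
  simp only [urnMeasure_succ_eq_polyaUrn, urnMeasure_eq_mixture_general, ofReal_ewens hτ0 hτ1,
    lambdaPart_eq_blockMeasure, Nat.add_sub_cancel]

end
end

section
/- Let m be a probability measure on E₁ × E₂ with first marginal m₁, let J : L²(m₁) → L²(m) be the isometry J g = g ∘ Prod.fst, and let π(f) ∈ L²(m₁) be defined by the property that J(π(f)) is the orthogonal projection of f onto the range of J. Let T be a bounded self-adjoint operator on L²(m) and T₁ a bounded self-adjoint operator on L²(m₁) such that T ∘ J = J ∘ T₁. Then for every f ∈ L²(m), ‖f‖² − ‖T f‖² = (‖π(f)‖² − ‖T₁ π(f)‖²) + (‖f − J(π(f))‖² − ‖T(f − J(π(f)))‖²). -/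
open MeasureTheory

noncomputable section

/-!
The intertwining relation makes `range J` invariant under `T`, and since `T` is symmetric its
orthogonal complement is invariant too. So `T` maps the orthogonal decomposition
`f = J p + (f - J p)` to an orthogonal decomposition of `T f`, and Pythagoras applies to both.
-/

section Lp

variable {α β E : Type*} [MeasurableSpace α] [MeasurableSpace β] [NormedAddCommGroup E]
  {μ : Measure α} {ν : Measure β} {p : ENNReal}

lemma norm_eq_of_ae_eq_comp_measurePreserving {φ : α → β} (hφ : MeasurePreserving φ μ ν)
    {f : Lp E p μ} {g : Lp E p ν} (hfg : f =ᵐ[μ] g ∘ φ) : ‖f‖ = ‖g‖ := by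
  have hf : f = Lp.compMeasurePreserving φ hφ g :=
    Lp.ext (hfg.trans (Lp.coeFn_compMeasurePreserving g hφ).symm)
  rw [hf, Lp.norm_compMeasurePreserving]

end Lp

section InnerProductSpace

variable {𝕜 H K : Type*} [RCLike 𝕜]
  [NormedAddCommGroup H] [InnerProductSpace 𝕜 H] [SeminormedAddCommGroup K] [Module 𝕜 K]

lemma norm_sq_sub_norm_map_sq_add_of_mem_invtSubmodule {T : H →ₗ[𝕜] H} (hT : T.IsSymmetric)
    {V : Submodule 𝕜 H} (hV : V ∈ Module.End.invtSubmodule T) {u v : H} (hu : u ∈ V)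
    (hv : v ∈ Vᗮ) :
    ‖u + v‖ ^ 2 - ‖T (u + v)‖ ^ 2
      = (‖u‖ ^ 2 - ‖T u‖ ^ 2) + (‖v‖ ^ 2 - ‖T v‖ ^ 2) := by
  have huv : inner 𝕜 u v = 0 := V.inner_right_of_mem_orthogonal hu hv
  have hTuv : inner 𝕜 (T u) (T v) = 0 :=
    V.inner_right_of_mem_orthogonal (hV hu) (hT.orthogonalComplement_mem_invtSubmodule hV hv)
  simp only [map_add, sq, norm_add_sq_eq_norm_sq_add_norm_sq_of_inner_eq_zero _ _ huv,
    norm_add_sq_eq_norm_sq_add_norm_sq_of_inner_eq_zero _ _ hTuv]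
  ring

theorem norm_energy_decomposition_general (J : K →ₗᵢ[𝕜] H) {T : H →ₗ[𝕜] H}
    (hT : T.IsSymmetric) {T₁ : K → K} (hTJ : ∀ g, T (J g) = J (T₁ g)) {f : H} {p : K}
    (hp : ∀ g, inner 𝕜 (f - J p) (J g) = 0) :
    ‖f‖ ^ 2 - ‖T f‖ ^ 2
      = (‖p‖ ^ 2 - ‖T₁ p‖ ^ 2) + (‖f - J p‖ ^ 2 - ‖T (f - J p)‖ ^ 2) := by
  have range_invariant : LinearMap.range J.toLinearMap ∈ Module.End.invtSubmodule T := by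
    rintro _ ⟨g, rfl⟩
    exact ⟨T₁ g, (hTJ g).symm⟩
  have residual_mem : f - J p ∈ (LinearMap.range J.toLinearMap)ᗮ := by
    rw [Submodule.mem_orthogonal']
    rintro _ ⟨g, rfl⟩
    exact hp g
  have energy_add := norm_sq_sub_norm_map_sq_add_of_mem_invtSubmodule hT range_invariant
    ⟨p, rfl⟩ residual_mem
  simpa only [add_sub_cancel, LinearIsometry.coe_toLinearMap, hTJ, J.norm_map] using energy_add

end InnerProductSpace

/-- let `m` be a probability measure on `E₁ × E₂` with first marginal
`m₁ = m.map Prod.fst`, `J : L²(m₁) → L²(m)` the isometry `J g = g ∘ Prod.fst`, and for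
`f ∈ L²(m)` let `π(f) = pf` be characterized by: `J pf` is the orthogonal projection of
`f` onto the range of `J` (i.e. `f - J pf ⟂ range J`).  If `T`, `T₁` are bounded
self-adjoint operators on `L²(m)`, `L²(m₁)` with `T ∘ J = J ∘ T₁`, then
`‖f‖² − ‖T f‖² = (‖pf‖² − ‖T₁ pf‖²) + (‖f − J pf‖² − ‖T(f − J pf)‖²)`. -/
theorem norm_energy_decomposition
    {E₁ E₂ : Type*} [MeasurableSpace E₁] [MeasurableSpace E₂]
    (m : Measure (E₁ × E₂)) [IsProbabilityMeasure m]
    (J : Lp ℝ 2 (m.map Prod.fst) →L[ℝ] Lp ℝ 2 m)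
    (hJ : ∀ g : Lp ℝ 2 (m.map Prod.fst), (J g : E₁ × E₂ → ℝ) =ᵐ[m] fun p => g p.1)
    (T : Lp ℝ 2 m →L[ℝ] Lp ℝ 2 m)
    (T₁ : Lp ℝ 2 (m.map Prod.fst) →L[ℝ] Lp ℝ 2 (m.map Prod.fst))
    (hT : ∀ u v : Lp ℝ 2 m, (inner ℝ (T u) v : ℝ) = inner ℝ u (T v))
    (hT₁ : ∀ u v : Lp ℝ 2 (m.map Prod.fst), (inner ℝ (T₁ u) v : ℝ) = inner ℝ u (T₁ v))
    (hTJ : ∀ g, T (J g) = J (T₁ g))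
    (f : Lp ℝ 2 m) (pf : Lp ℝ 2 (m.map Prod.fst))
    (hpf : ∀ g : Lp ℝ 2 (m.map Prod.fst), (inner ℝ (f - J pf) (J g) : ℝ) = 0) :
    ‖f‖ ^ 2 - ‖T f‖ ^ 2
      = (‖pf‖ ^ 2 - ‖T₁ pf‖ ^ 2) + (‖f - J pf‖ ^ 2 - ‖T (f - J pf)‖ ^ 2) := by
  have hJ_norm (g : Lp ℝ 2 (m.map Prod.fst)) : ‖J g‖ = ‖g‖ :=
    norm_eq_of_ae_eq_comp_measurePreserving (measurable_fst.measurePreserving m) (hJ g)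
  exact norm_energy_decomposition_general ⟨J.toLinearMap, hJ_norm⟩ (T := T.toLinearMap) hT hTJ hpf

end
end

section
/- Let m be a probability measure on E₁ × E₂ with first marginal m₁, J : L²(m₁) → L²(m) the isometry J g = g ∘ Prod.fst, and π the associated conditional-expectation map. Let (P_t)_{t≥0} and (P¹_t)_{t≥0} be self-adjoint contraction semigroups on L²(m) and L²(m₁) respectively, satisfying the intertwining relation P_t ∘ J = J ∘ P¹_t for all t ≥ 0. Let ℰ and ℰ₁ be their energy forms. Then for every f ∈ L²(m), ℰ(f) = ℰ₁(π(f)) + ℰ(f − J(π(f))) as an identity in [0,∞]; in particular ℰ₁(π(f)) ≤ ℰ(f). -/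
/-!
By self-adjointness, `⟨P_{(s+t)/2} f, f⟩ = ⟨P_{s/2} f, P_{t/2} f⟩`, so `t ↦ ⟨P_t f, f⟩` is midpoint
convex; being bounded by `‖f‖²`, it is convex. Hence the difference quotients defining `ℰ(f)` are
antitone in `t`, and the sum of two energies is the supremum of the sums of their quotients.
Intertwining makes `range J` invariant under `P_t`, so the quotients are additive along
`f = J (π f) + (f - J (π f))`, and `J`, being isometric, identifies those of `J g` under `P` with
those of `g` under `P¹`.
-/

open MeasureTheory

noncomputable section

/-- The energy form of a semigroup `(P_t)_{t≥0}` on a real Hilbert space: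
`ℰ(f) = ⨆_{t>0} ENNReal.ofReal (t⁻¹ (‖f‖² − ⟨P_t f, f⟩)) ∈ [0,∞]`. -/
def energyForm {H : Type*} [NormedAddCommGroup H] [InnerProductSpace ℝ H]
    (P : ℝ → H →L[ℝ] H) (f : H) : ENNReal :=
  ⨆ (t : ℝ) (_ : 0 < t), ENNReal.ofReal (t⁻¹ * (‖f‖ ^ 2 - (inner ℝ (P t f) f : ℝ)))

section MidpointConvex

open Set

theorem nonpos_of_midpoint_le {g : ℝ → ℝ} {a b : ℝ}
    (hmid : ∀ x ∈ Icc a b, ∀ y ∈ Icc a b, g ((x + y) / 2) ≤ (g x + g y) / 2)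
    (hbdd : BddAbove (g '' Icc a b)) (ha : g a ≤ 0) (hb : g b ≤ 0) {x : ℝ} (hx : x ∈ Icc a b) :
    g x ≤ 0 := by
  have hab : a ≤ b := hx.1.trans hx.2
  set M := sSup (g '' Icc a b)
  have le_M {y : ℝ} (hy : y ∈ Icc a b) : g y ≤ M := le_csSup hbdd (mem_image_of_mem g hy)
  -- Every point is midway between an end point and another point, which halves the supremum.
  have le_half {y : ℝ} (hy : y ∈ Icc a b) : g y ≤ M / 2 := by
    rcases le_total y ((a + b) / 2) with hleft | hright
    · have hmem : 2 * y - a ∈ Icc a b := ⟨by linarith [hy.1], by linarith⟩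
      calc g y = g ((a + (2 * y - a)) / 2) := by ring_nf
        _ ≤ (g a + g (2 * y - a)) / 2 := hmid a (left_mem_Icc.2 hab) _ hmem
        _ ≤ M / 2 := by linarith [le_M hmem]
    · have hmem : 2 * y - b ∈ Icc a b := ⟨by linarith, by linarith [hy.2]⟩
      calc g y = g ((b + (2 * y - b)) / 2) := by ring_nf
        _ ≤ (g b + g (2 * y - b)) / 2 := hmid b (right_mem_Icc.2 hab) _ hmem
        _ ≤ M / 2 := by linarith [le_M hmem]
  have hM : M ≤ M / 2 :=
    csSup_le ((nonempty_Icc.2 hab).image g) (forall_mem_image.2 fun _ => le_half)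
  linarith [le_M hx]

theorem convexOn_of_midpoint_le {E : Type*} [AddCommGroup E] [Module ℝ E] {s : Set E} {f : E → ℝ}
    (hs : Convex ℝ s) (hmid : ∀ x ∈ s, ∀ y ∈ s, f (midpoint ℝ x y) ≤ (f x + f y) / 2)
    (hbdd : ∀ x ∈ s, ∀ y ∈ s, BddAbove (f '' segment ℝ x y)) : ConvexOn ℝ s f := by
  refine ⟨hs, fun x hx y hy a b ha hb hab => ?_⟩
  let γ : ℝ →ᵃ[ℝ] E := AffineMap.lineMap x y
  let chord (t : ℝ) : ℝ := (1 - t) * f x + t * f y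
  have γ_mem {t : ℝ} (ht : t ∈ Icc (0 : ℝ) 1) : γ t ∈ s := hs.lineMap_mem hx hy ht
  have excess_midpoint_le : ∀ t ∈ Icc (0 : ℝ) 1, ∀ u ∈ Icc (0 : ℝ) 1,
      f (γ ((t + u) / 2)) - chord ((t + u) / 2) ≤
        ((f (γ t) - chord t) + (f (γ u) - chord u)) / 2 := fun t ht u hu => by
    have γ_midpoint : γ ((t + u) / 2) = midpoint ℝ (γ t) (γ u) := by
      rw [← γ.map_midpoint, midpoint_eq_smul_add, invOf_eq_inv, smul_eq_mul, inv_mul_eq_div]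
    have chord_midpoint : chord ((t + u) / 2) = (chord t + chord u) / 2 := by
      simp only [chord]
      ring
    rw [γ_midpoint, chord_midpoint]
    linarith [hmid _ (γ_mem ht) _ (γ_mem hu)]
  have excess_bddAbove : BddAbove ((fun t => f (γ t) - chord t) '' Icc 0 1) := by
    obtain ⟨M, hM⟩ := hbdd x hx y hy
    obtain ⟨c, hc⟩ : BddBelow (chord '' Icc 0 1) := (isCompact_Icc.image (by fun_prop)).bddBelow
    refine ⟨M - c, forall_mem_image.2 fun t ht => sub_le_sub (hM ?_) (hc (mem_image_of_mem _ ht))⟩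
    exact mem_image_of_mem f (segment_eq_image_lineMap ℝ x y ▸ mem_image_of_mem _ ht)
  have excess_nonpos : f (γ b) - chord b ≤ 0 :=
    nonpos_of_midpoint_le excess_midpoint_le excess_bddAbove (by simp [γ, chord])
      (by simp [γ, chord]) ⟨hb, by linarith⟩
  obtain rfl : a = 1 - b := by linarith
  simpa [γ, chord, AffineMap.lineMap_apply_module] using excess_nonpos

end MidpointConvex

theorem norm_eq_of_ae_eq_comp {α β E : Type*} [MeasurableSpace α] [MeasurableSpace β]
    [NormedAddCommGroup E] {p : ENNReal} {μ : Measure α} {ν : Measure β} {φ : α → β}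
    (hφ : MeasurePreserving φ μ ν) {g : Lp E p ν} {h : Lp E p μ} (hgh : h =ᵐ[μ] g ∘ φ) :
    ‖h‖ = ‖g‖ := by
  rw [Lp.ext (hgh.trans (Lp.coeFn_compMeasurePreserving g hφ).symm), Lp.norm_compMeasurePreserving]

section Semigroup

variable {H : Type*} [NormedAddCommGroup H] [InnerProductSpace ℝ H] {P : ℝ → H →L[ℝ] H}

theorem inner_map_self_le_norm_sq {T : H →L[ℝ] H} (hT : ‖T‖ ≤ 1) (f : H) :
    inner ℝ (T f) f ≤ ‖f‖ ^ 2 :=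
  calc inner ℝ (T f) f ≤ ‖T f‖ * ‖f‖ := real_inner_le_norm _ _
    _ ≤ 1 * ‖f‖ * ‖f‖ := by gcongr; exact T.le_of_opNorm_le hT f
    _ = ‖f‖ ^ 2 := by ring

/-- The approximating energy `t⁻¹ (‖f‖² - ⟨P_t f, f⟩)`, whose supremum over `t > 0` is the energy
form of `P` at `f`. -/
def approxEnergy (P : ℝ → H →L[ℝ] H) (t : ℝ) (f : H) : ℝ :=
  t⁻¹ * (‖f‖ ^ 2 - inner ℝ (P t f) f)

theorem energyForm_eq_iSup_approxEnergy (P : ℝ → H →L[ℝ] H) (f : H) :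
    energyForm P f = ⨆ t : Set.Ioi (0 : ℝ), ENNReal.ofReal (approxEnergy P t f) :=
  iSup_subtype'

theorem approxEnergy_nonneg {t : ℝ} (ht : 0 ≤ t) (hPt : ‖P t‖ ≤ 1) (f : H) :
    0 ≤ approxEnergy P t f :=
  mul_nonneg (inv_nonneg.2 ht) (sub_nonneg.2 (inner_map_self_le_norm_sq hPt f))

theorem approxEnergy_add {t : ℝ} (hPt : (P t : H →ₗ[ℝ] H).IsSymmetric) {u v : H}
    (huv : inner ℝ u v = 0) (hPuv : inner ℝ (P t u) v = 0) :
    approxEnergy P t (u + v) = approxEnergy P t u + approxEnergy P t v := by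
  have hPvu : inner ℝ (P t v) u = 0 := by
    rw [← hPuv, real_inner_comm]
    exact (hPt u v).symm
  simp only [approxEnergy, map_add, inner_add_left, inner_add_right, norm_add_sq_real, huv, hPuv,
    hPvu]
  ring

/-- Self-adjoint contraction semigroups `(P_t)_{t ≥ 0}` on a real inner product space. Values at
negative times are unconstrained, and self-adjointness is expressed as symmetry, so that `H` need
not be complete. -/
structure IsSelfAdjointContractionSemigroup (P : ℝ → H →L[ℝ] H) : Prop where
  zero : P 0 = ContinuousLinearMap.id ℝ H
  add : ∀ s t : ℝ, 0 ≤ s → 0 ≤ t → P (s + t) = (P s).comp (P t)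
  isSymmetric : ∀ t : ℝ, 0 ≤ t → (P t : H →ₗ[ℝ] H).IsSymmetric
  norm_le_one : ∀ t : ℝ, 0 ≤ t → ‖P t‖ ≤ 1

namespace IsSelfAdjointContractionSemigroup

theorem inner_map_add_self (hP : IsSelfAdjointContractionSemigroup P) {s t : ℝ} (hs : 0 ≤ s)
    (ht : 0 ≤ t) (f : H) : inner ℝ (P (s + t) f) f = inner ℝ (P s f) (P t f) := by
  rw [add_comm, hP.add t s ht hs]
  exact hP.isSymmetric t ht (P s f) f

theorem convexOn_inner_map_self (hP : IsSelfAdjointContractionSemigroup P) (f : H) :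
    ConvexOn ℝ (Set.Ici 0) fun t => inner ℝ (P t f) f := by
  refine convexOn_of_midpoint_le (convex_Ici 0) (fun s (hs : 0 ≤ s) t (ht : 0 ≤ t) => ?_)
    fun s hs t ht => ⟨‖f‖ ^ 2, Set.forall_mem_image.2 fun r hr =>
      inner_map_self_le_norm_sq (hP.norm_le_one r ((convex_Ici 0).segment_subset hs ht hr)) f⟩
  have inner_eq_norm_sq {r : ℝ} (hr : 0 ≤ r) : inner ℝ (P r f) f = ‖P (r / 2) f‖ ^ 2 := by
    rw [← real_inner_self_eq_norm_sq, ← hP.inner_map_add_self (by positivity) (by positivity),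
      add_halves]
  have inner_midpoint : inner ℝ (P (midpoint ℝ s t) f) f = inner ℝ (P (s / 2) f) (P (t / 2) f) := by
    rw [← hP.inner_map_add_self (by positivity) (by positivity), midpoint_eq_smul_add,
      invOf_eq_inv, smul_eq_mul, inv_mul_eq_div, add_div]
  rw [inner_midpoint, inner_eq_norm_sq hs, inner_eq_norm_sq ht]
  linarith [norm_sub_sq_real (P (s / 2) f) (P (t / 2) f), sq_nonneg ‖P (s / 2) f - P (t / 2) f‖]

theorem antitoneOn_approxEnergy (hP : IsSelfAdjointContractionSemigroup P) (f : H) :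
    AntitoneOn (fun t => approxEnergy P t f) (Set.Ioi 0) := by
  intro s (hs : 0 < s) t (ht : 0 < t) hst
  have neg_approxEnergy (r : ℝ) :
      (inner ℝ (P r f) f - inner ℝ (P 0 f) f) / (r - 0) = -approxEnergy P r f := by
    rw [hP.zero, ContinuousLinearMap.id_apply, real_inner_self_eq_norm_sq, approxEnergy]
    ring
  have slope_le := (hP.convexOn_inner_map_self f).secant_mono Set.self_mem_Ici hs.le ht.le hs.ne'
    ht.ne' hst
  rwa [neg_approxEnergy, neg_approxEnergy, neg_le_neg_iff] at slope_le

theorem energyForm_add_of_inner_eq_zero (hP : IsSelfAdjointContractionSemigroup P) {u v : H}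
    (huv : ∀ t : ℝ, 0 ≤ t → inner ℝ (P t u) v = 0) :
    energyForm P (u + v) = energyForm P u + energyForm P v := by
  have antitone_ofReal (f : H) :
      Antitone fun t : Set.Ioi (0 : ℝ) => ENNReal.ofReal (approxEnergy P t f) :=
    fun s t hst => ENNReal.ofReal_le_ofReal (hP.antitoneOn_approxEnergy f s.2 t.2 hst)
  have huv₀ : inner ℝ u v = 0 := by simpa [hP.zero] using huv 0 le_rfl
  have ofReal_add (t : Set.Ioi (0 : ℝ)) : ENNReal.ofReal (approxEnergy P t (u + v)) =
      ENNReal.ofReal (approxEnergy P t u) + ENNReal.ofReal (approxEnergy P t v) := by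
    have ht : (0 : ℝ) ≤ t := t.2.le
    have hPt : ‖P t‖ ≤ 1 := hP.norm_le_one t ht
    rw [approxEnergy_add (hP.isSymmetric t ht) huv₀ (huv t ht),
      ENNReal.ofReal_add (approxEnergy_nonneg ht hPt u) (approxEnergy_nonneg ht hPt v)]
  simp only [energyForm_eq_iSup_approxEnergy, ofReal_add]
  refine (ENNReal.iSup_add_iSup fun s t => ⟨min s t, ?_⟩).symm
  exact add_le_add (antitone_ofReal u (min_le_left s t)) (antitone_ofReal v (min_le_right s t))

end IsSelfAdjointContractionSemigroup

variable {H₁ : Type*} [NormedAddCommGroup H₁] [InnerProductSpace ℝ H₁] {P₁ : ℝ → H₁ →L[ℝ] H₁}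

theorem energyForm_map_linearIsometry (J : H₁ →ₗᵢ[ℝ] H) {g : H₁}
    (hint : ∀ t : ℝ, 0 < t → P t (J g) = J (P₁ t g)) : energyForm P (J g) = energyForm P₁ g :=
  iSup_congr fun t => iSup_congr fun ht => by rw [hint t ht, J.inner_map_map, J.norm_map]

theorem energyForm_decomposition_general (hP : IsSelfAdjointContractionSemigroup P)
    (J : H₁ →ₗᵢ[ℝ] H) (hint : ∀ t : ℝ, 0 ≤ t → ∀ g, P t (J g) = J (P₁ t g)) (f : H) (pf : H₁)
    (hpf : ∀ g : H₁, inner ℝ (f - J pf) (J g) = 0) :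
    energyForm P f = energyForm P₁ pf + energyForm P (f - J pf) ∧
      energyForm P₁ pf ≤ energyForm P f := by
  have orthogonal (t : ℝ) (ht : 0 ≤ t) : inner ℝ (P t (J pf)) (f - J pf) = 0 := by
    rw [hint t ht, real_inner_comm, hpf]
  have key : energyForm P f = energyForm P₁ pf + energyForm P (f - J pf) :=
    calc energyForm P f = energyForm P (J pf + (f - J pf)) := by rw [add_sub_cancel]
      _ = energyForm P (J pf) + energyForm P (f - J pf) :=
        hP.energyForm_add_of_inner_eq_zero orthogonal
      _ = energyForm P₁ pf + energyForm P (f - J pf) := by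
        rw [energyForm_map_linearIsometry J fun t ht => hint t ht.le pf]
  exact ⟨key, key ▸ le_self_add⟩

end Semigroup

/-- let `m` be a probability measure on `E₁ × E₂` with first marginal
`m₁ = m.map Prod.fst`, `J : L²(m₁) → L²(m)` the isometry `J g = g ∘ Prod.fst`, and for
`f ∈ L²(m)` let `π(f) = pf` be characterized by `f − J pf ⟂ range J`.  If `(P_t)` and
`(P¹_t)` are self-adjoint contraction semigroups on `L²(m)`, `L²(m₁)` intertwined by
`J` (`P_t ∘ J = J ∘ P¹_t`), with energy forms `ℰ`, `ℰ₁`, then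
`ℰ(f) = ℰ₁(π(f)) + ℰ(f − J(π(f)))` in `[0,∞]`; in particular `ℰ₁(π(f)) ≤ ℰ(f)`. -/
theorem energyForm_decomposition
    {E₁ E₂ : Type*} [MeasurableSpace E₁] [MeasurableSpace E₂]
    (m : Measure (E₁ × E₂)) [IsProbabilityMeasure m]
    (J : Lp ℝ 2 (m.map Prod.fst) →L[ℝ] Lp ℝ 2 m)
    (hJ : ∀ g : Lp ℝ 2 (m.map Prod.fst), (J g : E₁ × E₂ → ℝ) =ᵐ[m] fun p => g p.1)
    (P : ℝ → Lp ℝ 2 m →L[ℝ] Lp ℝ 2 m)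
    (P₁ : ℝ → Lp ℝ 2 (m.map Prod.fst) →L[ℝ] Lp ℝ 2 (m.map Prod.fst))
    (hP0 : P 0 = ContinuousLinearMap.id ℝ _)
    (hPadd : ∀ s t : ℝ, 0 ≤ s → 0 ≤ t → P (s + t) = (P s).comp (P t))
    (hPsa : ∀ t : ℝ, 0 ≤ t → ∀ u v, (inner ℝ (P t u) v : ℝ) = inner ℝ u (P t v))
    (hPcontr : ∀ t : ℝ, 0 ≤ t → ‖P t‖ ≤ 1)
    (hP₁0 : P₁ 0 = ContinuousLinearMap.id ℝ _)
    (hP₁add : ∀ s t : ℝ, 0 ≤ s → 0 ≤ t → P₁ (s + t) = (P₁ s).comp (P₁ t))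
    (hP₁sa : ∀ t : ℝ, 0 ≤ t → ∀ u v, (inner ℝ (P₁ t u) v : ℝ) = inner ℝ u (P₁ t v))
    (hP₁contr : ∀ t : ℝ, 0 ≤ t → ‖P₁ t‖ ≤ 1)
    (hint : ∀ t : ℝ, 0 ≤ t → ∀ g, P t (J g) = J (P₁ t g))
    (f : Lp ℝ 2 m) (pf : Lp ℝ 2 (m.map Prod.fst))
    (hpf : ∀ g : Lp ℝ 2 (m.map Prod.fst), (inner ℝ (f - J pf) (J g) : ℝ) = 0) :
    energyForm P f = energyForm P₁ pf + energyForm P (f - J pf)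
      ∧ energyForm P₁ pf ≤ energyForm P f := by
  have norm_J (g : Lp ℝ 2 (m.map Prod.fst)) : ‖J g‖ = ‖g‖ :=
    norm_eq_of_ae_eq_comp (measurable_fst.measurePreserving m) (hJ g)
  exact energyForm_decomposition_general ⟨hP0, hPadd, hPsa, hPcontr⟩ ⟨J.toLinearMap, norm_J⟩ hint f
    pf hpf

end
end
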